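/- Let U ⊆ ℝ^d be an open convex set, let g and h be convex functions twice differentiable on U, and let L > 0. Then g is L-smooth relative to h on U (i.e., g(z₂) ≤ g(z₁) + ⟨∇g(z₁), z₂ − z₁⟩ + L D_h(z₂, z₁) for all z₁, z₂ ∈ U) if and only if the function L h − g is convex on U. -/

import Mathlib

open scoped RealInnerProductSpace

/-!
Relative smoothness of `g` says `D_g ≤ L D_h` on `U`. The Bregman divergence is linear in the
function, so this is `0 ≤ D_f` for `f = L h - g`, which is the first-order characterization of
convexity of `f`. If `f` is convex, its restriction to the segment from `x` to `y` has initial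
slope at most `f y - f x`. Conversely, averaging the two affine lower bounds based at
`z = a x + b y` with weights `a` and `b` cancels the linear terms.
-/

theorem convexOn_of_forall_exists_linear_le {𝕜 E : Type*} [Ring 𝕜] [PartialOrder 𝕜]
    [IsOrderedRing 𝕜] [AddCommGroup E] [Module 𝕜 E] {s : Set E} {f : E → 𝕜} (hs : Convex 𝕜 s)
    (hf : ∀ z ∈ s, ∃ φ : E →ₗ[𝕜] 𝕜, ∀ x ∈ s, f z + φ (x - z) ≤ f x) : ConvexOn 𝕜 s f := by
  refine ⟨hs, fun x hx y hy a b ha hb hab => ?_⟩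
  obtain ⟨φ, hφ⟩ := hf _ (hs hx hy ha hb hab)
  set z := a • x + b • y with hz
  have barycenter : a • (x - z) + b • (y - z) = 0 := by
    rw [smul_sub, smul_sub, sub_add_sub_comm, ← add_smul, hab, one_smul, ← hz, sub_self]
  have linear_terms_cancel : a • φ (x - z) + b • φ (y - z) = 0 := by
    rw [← map_smul, ← map_smul, ← map_add, barycenter, map_zero]
  calc
    f z = (a + b) • f z + (a • φ (x - z) + b • φ (y - z)) := by
      rw [hab, one_smul, linear_terms_cancel, add_zero]
    _ = a • (f z + φ (x - z)) + b • (f z + φ (y - z)) := by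
      rw [add_smul, smul_add, smul_add, add_add_add_comm]
    _ ≤ a • f x + b • f y :=
      add_le_add (mul_le_mul_of_nonneg_left (hφ x hx) ha) (mul_le_mul_of_nonneg_left (hφ y hy) hb)

section

variable {E : Type*} [AddCommGroup E] [Module ℝ E]

theorem hasLineDerivWithinAt_le_sub_of_convexOn {s : Set E} {f : E → ℝ} {m : ℝ} {x y : E}
    (hf : ConvexOn ℝ s f) (hx : x ∈ s) (hy : y ∈ s)
    (hm : HasLineDerivWithinAt ℝ f m s x (y - x)) : m ≤ f y - f x := by
  have line_eq : (fun t : ℝ => x + t • (y - x)) = AffineMap.lineMap x y := by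
    ext t
    rw [AffineMap.lineMap_apply_module', add_comm]
  have convex_on_line : ConvexOn ℝ ((fun t : ℝ => x + t • (y - x)) ⁻¹' s)
      (fun t => f (x + t • (y - x))) := by
    have hline := hf.comp_affineMap (AffineMap.lineMap x y)
    rwa [← line_eq] at hline
  have le_slope : m ≤ slope (fun t : ℝ => f (x + t • (y - x))) 0 1 :=
    convex_on_line.le_slope_of_hasDerivWithinAt (by simpa using hx) (by simpa using hy)
      one_pos hm
  simpa [slope_def_field] using le_slope

/-- The Bregman divergence `D_h(z₂, z₁)`, the gap at `z₂` between `h` and its linearization at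
`z₁`. The derivative of `h` at `z` is passed as the linear form `h' z`, so that one-sided
and Gâteaux derivatives are covered; no relation between `h` and `h'` is built in. -/
def bregmanDiv (h : E → ℝ) (h' : E → E →ₗ[ℝ] ℝ) (z₂ z₁ : E) : ℝ :=
  h z₂ - h z₁ - h' z₁ (z₂ - z₁)

theorem bregmanDiv_le_iff {h : E → ℝ} {h' : E → E →ₗ[ℝ] ℝ} {z₂ z₁ : E} {c : ℝ} :
    bregmanDiv h h' z₂ z₁ ≤ c ↔ h z₂ ≤ h z₁ + h' z₁ (z₂ - z₁) + c := by
  rw [bregmanDiv, sub_sub, sub_le_iff_le_add']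

theorem bregmanDiv_nonneg_iff {h : E → ℝ} {h' : E → E →ₗ[ℝ] ℝ} {z₂ z₁ : E} :
    0 ≤ bregmanDiv h h' z₂ z₁ ↔ h z₁ + h' z₁ (z₂ - z₁) ≤ h z₂ := by
  rw [bregmanDiv, sub_sub, sub_nonneg]

theorem bregmanDiv_const_mul_sub (L : ℝ) (g h : E → ℝ) (g' h' : E → E →ₗ[ℝ] ℝ) (z₂ z₁ : E) :
    bregmanDiv (fun x => L * h x - g x) (fun x => L • h' x - g' x) z₂ z₁ =
      L * bregmanDiv h h' z₂ z₁ - bregmanDiv g g' z₂ z₁ := by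
  simp only [bregmanDiv, LinearMap.sub_apply, LinearMap.smul_apply, smul_eq_mul]
  ring

theorem convexOn_iff_bregmanDiv_nonneg {U : Set E} (hU : Convex ℝ U) {f : E → ℝ}
    {f' : E → E →ₗ[ℝ] ℝ} (hf' : ∀ x ∈ U, ∀ v, HasLineDerivWithinAt ℝ f (f' x v) U x v) :
    ConvexOn ℝ U f ↔ ∀ z₁ ∈ U, ∀ z₂ ∈ U, 0 ≤ bregmanDiv f f' z₂ z₁ := by
  constructor
  · intro hf z₁ hz₁ z₂ hz₂
    exact sub_nonneg.2 (hasLineDerivWithinAt_le_sub_of_convexOn hf hz₁ hz₂ (hf' z₁ hz₁ _))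
  · intro hD
    exact convexOn_of_forall_exists_linear_le hU fun z hz =>
      ⟨f' z, fun x hx => bregmanDiv_nonneg_iff.1 (hD z hz x hx)⟩

theorem stmt14_general {U : Set E} (hU : Convex ℝ U) {g h : E → ℝ} {g' h' : E → E →ₗ[ℝ] ℝ}
    (hg' : ∀ x ∈ U, ∀ v, HasLineDerivWithinAt ℝ g (g' x v) U x v)
    (hh' : ∀ x ∈ U, ∀ v, HasLineDerivWithinAt ℝ h (h' x v) U x v) (L : ℝ) :
    (∀ z₁ ∈ U, ∀ z₂ ∈ U, g z₂ ≤ g z₁ + g' z₁ (z₂ - z₁) + L * bregmanDiv h h' z₂ z₁) ↔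
      ConvexOn ℝ U (fun x => L * h x - g x) := by
  have hf' : ∀ x ∈ U, ∀ v,
      HasLineDerivWithinAt ℝ (fun x => L * h x - g x) ((L • h' x - g' x) v) U x v :=
    fun x hx v => (HasDerivWithinAt.const_mul L (hh' x hx v)).sub (hg' x hx v)
  rw [convexOn_iff_bregmanDiv_nonneg hU hf']
  simp only [bregmanDiv_const_mul_sub, sub_nonneg, bregmanDiv_le_iff]

end

/-- Characterization of relative smoothness, Lu–Freund–Nesterov.
Let `U ⊆ ℝ^d` be open convex, `g, h` convex and twice differentiable on `U`, `L > 0`.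
Then `g` is `L`-smooth relative to `h` on `U`, i.e.,
`g(z₂) ≤ g(z₁) + ⟨∇g(z₁), z₂ − z₁⟩ + L D_h(z₂, z₁)` for all `z₁, z₂ ∈ U`,
if and only if `L h − g` is convex on `U`. -/
theorem stmt14 {d : ℕ} (U : Set (EuclideanSpace ℝ (Fin d)))
    (hUopen : IsOpen U) (hUcv : Convex ℝ U)
    (g h : EuclideanSpace ℝ (Fin d) → ℝ)
    (g' h' : EuclideanSpace ℝ (Fin d) → EuclideanSpace ℝ (Fin d))
    (hg : ConvexOn ℝ U g) (hh : ConvexOn ℝ U h)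
    (hgC2 : ContDiffOn ℝ 2 g U) (hhC2 : ContDiffOn ℝ 2 h U)
    (hg' : ∀ y ∈ U, HasGradientAt g (g' y) y)
    (hh' : ∀ y ∈ U, HasGradientAt h (h' y) y)
    (L : ℝ) (hL : 0 < L) :
    (∀ z₁ ∈ U, ∀ z₂ ∈ U,
        g z₂ ≤ g z₁ + ⟪g' z₁, z₂ - z₁⟫ + L * (h z₂ - h z₁ - ⟪h' z₁, z₂ - z₁⟫)) ↔
      ConvexOn ℝ U (fun x => L * h x - g x) :=
  stmt14_general (g' := fun x => innerₗ _ (g' x)) (h' := fun x => innerₗ _ (h' x)) hUcv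
    (fun x hx v => ((hg' x hx).hasFDerivAt.hasLineDerivAt v).hasLineDerivWithinAt U)
    (fun x hx v => ((hh' x hx).hasFDerivAt.hasLineDerivAt v).hasLineDerivWithinAt U) L
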